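/- Let n ≥ 1, c_u ∈ (0,1), C_u ∈ (1,∞), and let U ⊊ ℝⁿ be an unbounded (c_u,C_u)-uniform domain with nonempty boundary. Let h : closure(U) → ℝ be continuous, positive and harmonic on U, and identically 0 on ∂U. Then there exists a constant A ∈ [1,∞), depending only on n, c_u and C_u, such that for every x ∈ U, every r > 0, and every point x_r ∈ U with d_U(x,x_r) ≤ r/4 and dist(x_r, ∂U) ≥ c_u·r/8, one has A⁻¹ · h(x_r)² · rⁿ ≤ ∫_{B_U(x,r)} h² dλ ≤ A · h(x_r)² · rⁿ, where λ is Lebesgue measure and B_U(x,r) = {y ∈ U : d_U(x,y) < r}. -/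

import Mathlib

open Set Metric MeasureTheory ENNReal

noncomputable section

abbrev En (n : ℕ) := EuclideanSpace ℝ (Fin n)

/-- The length of the curve `γ : [0,1] → X`, defined as the supremum of sums
`∑ d(γ(t_i), γ(t_{i-1}))` over partitions `0 ≤ t₀ < … < t_k ≤ 1`. -/
def curveLength {X : Type*} [PseudoEMetricSpace X] (γ : ℝ → X) : ℝ≥0∞ :=
  eVariationOn γ (Set.Icc 0 1)

/-- `γ` is a continuous curve in `Ω` from `x` to `y`. -/
def IsCurveIn {X : Type*} [PseudoEMetricSpace X] (Ω : Set X) (x y : X) (γ : ℝ → X) : Prop :=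
  ContinuousOn γ (Set.Icc 0 1) ∧ Set.MapsTo γ (Set.Icc 0 1) Ω ∧ γ 0 = x ∧ γ 1 = y

/-- The inner (pseudo)metric of `Ω`: the infimum of lengths of continuous curves
joining `x` to `y` inside `Ω`. -/
def innerDist {X : Type*} [PseudoEMetricSpace X] (Ω : Set X) (x y : X) : ℝ≥0∞ :=
  ⨅ (γ : ℝ → X) (_ : IsCurveIn Ω x y γ), curveLength γ

/-- `U` is a `(c,C)`-uniform domain in `ℝⁿ`. -/
def IsUniformDomain {n : ℕ} (c C : ℝ) (U : Set (En n)) : Prop :=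
  IsOpen U ∧ IsConnected U ∧
    ∀ x ∈ U, ∀ y ∈ U, ∃ γ : ℝ → En n, IsCurveIn U x y γ ∧
      curveLength γ ≤ ENNReal.ofReal (C * dist x y) ∧
      ∀ t ∈ Set.Icc (0:ℝ) 1,
        c * min (dist x (γ t)) (dist (γ t) y) ≤ Metric.infDist (γ t) (frontier U)

/-- The Laplacian `∑ ∂²f/∂xᵢ²` of `f : ℝⁿ → ℝ`. -/
def lap {n : ℕ} (f : En n → ℝ) (x : En n) : ℝ :=
  ∑ i : Fin n,
    fderiv ℝ (fun y => fderiv ℝ f y (EuclideanSpace.single i 1)) x (EuclideanSpace.single i 1)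

/-- `f` is harmonic on the open set `V`: twice continuously differentiable with
vanishing Laplacian. -/
def IsHarmonicOn {n : ℕ} (f : En n → ℝ) (V : Set (En n)) : Prop :=
  ContDiffOn ℝ 2 f V ∧ ∀ x ∈ V, lap f x = 0

/-!
The core is the Carleson estimate `g ≤ K * g z` on balls, for the extension `g` of `h` by zero and
an interior point `z` of comparable scale; the upper bound follows by integration. The lower bound
needs only Harnack's inequality on a ball around `x_r`.

Harnack chains along the uniform curves show that `g` exceeds `g z` at distance `δ` from the
boundary by at most a factor polynomial in `r / δ`. Near `∂U` this bound degenerates, and Domar's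
iteration takes over: `g ^ 3` satisfies a sub-mean value inequality everywhere, and every ball
centred in `U` contains a smaller ball, of comparable radius `δ`, on which the polynomial bound
applies. If `g x` is large compared with that bound, this hole contributes less than its share to
the average, so `g ^ 3` is at least `(1 + η) * g x ^ 3` somewhere in the ball. Repeating with
geometrically shrinking radii, which the growth of `g` allows, gives points in a fixed ball along
which `g` is unbounded, contradicting continuity.
-/

open Filter Topology

section PositivePartPower

theorem hasDerivAt_max_zero_pow (k : ℕ) (t : ℝ) :
    HasDerivAt (fun s : ℝ => max s 0 ^ (k + 2)) ((k + 2) * max t 0 ^ (k + 1)) t := by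
  rcases lt_trichotomy t 0 with ht | rfl | ht
  · have heq : (fun s : ℝ => max s 0 ^ (k + 2)) =ᶠ[𝓝 t] fun _ => 0 := by
      filter_upwards [gt_mem_nhds ht] with s hs
      simp [max_eq_right hs.le]
    simpa [max_eq_right ht.le] using (hasDerivAt_const t (0 : ℝ)).congr_of_eventuallyEq heq
  · have hO : (fun s : ℝ => max s 0 ^ (k + 2)) =O[𝓝 0] fun s : ℝ => s ^ (k + 2) := by
      refine .pow (.of_bound 1 (Eventually.of_forall fun s => ?_)) _
      rw [one_mul, Real.norm_of_nonneg (le_max_right s 0), Real.norm_eq_abs]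
      exact max_le (le_abs_self s) (abs_nonneg s)
    rw [hasDerivAt_iff_isLittleO]
    simpa using hO.trans_isLittleO (Asymptotics.isLittleO_pow_id (by omega))
  · have heq : (fun s : ℝ => max s 0 ^ (k + 2)) =ᶠ[𝓝 t] fun s => s ^ (k + 2) := by
      filter_upwards [lt_mem_nhds ht] with s hs
      simp [max_eq_left hs.le]
    simpa [max_eq_left ht.le] using (hasDerivAt_pow (k + 2) t).congr_of_eventuallyEq heq

theorem contDiff_max_zero_pow (k : ℕ) : ContDiff ℝ k (fun s : ℝ => max s 0 ^ (k + 1)) := by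
  induction k with
  | zero => exact contDiff_zero.2 (by fun_prop)
  | succ k ih =>
    have hderiv : deriv (fun s : ℝ => max s 0 ^ (k + 2)) =
        fun s => ((k : ℝ) + 2) * max s 0 ^ (k + 1) :=
      funext fun s => (hasDerivAt_max_zero_pow k s).deriv
    push_cast
    refine contDiff_succ_iff_deriv.2
      ⟨fun s => (hasDerivAt_max_zero_pow k s).differentiableAt, by simp, ?_⟩
    rw [hderiv]
    exact contDiff_const.mul ih

end PositivePartPower

section Laplacian

variable {n : ℕ} {f g : En n → ℝ} {x : En n} {i : Fin n}

/-- The partial derivative `∂f/∂xᵢ`, in terms of which `lap f = ∑ᵢ ∂ᵢ ∂ᵢ f` definitionally. -/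
def pderiv (i : Fin n) (f : En n → ℝ) (x : En n) : ℝ :=
  fderiv ℝ f x (EuclideanSpace.single i 1)

theorem lap_eq_sum_pderiv (f : En n → ℝ) (x : En n) :
    lap f x = ∑ i, pderiv i (pderiv i f) x :=
  rfl

theorem fderiv_apply_eq_sum_pderiv (f : En n → ℝ) (x v : En n) :
    fderiv ℝ f x v = ∑ i, v i * pderiv i f x := by
  have hv : v = ∑ i, v i • EuclideanSpace.single i (1 : ℝ) := by
    simpa using ((EuclideanSpace.basisFun (Fin n) ℝ).sum_repr v).symm
  conv_lhs => rw [hv, map_sum]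
  simp only [map_smul, smul_eq_mul, pderiv]

theorem pderiv_congr (h : f =ᶠ[𝓝 x] g) : pderiv i f =ᶠ[𝓝 x] pderiv i g := by
  filter_upwards [h.eventuallyEq_nhds] with y hy
  rw [pderiv, hy.fderiv_eq, pderiv]

theorem pderiv_mul (hf : DifferentiableAt ℝ f x) (hg : DifferentiableAt ℝ g x) :
    pderiv i (fun y => f y * g y) x = f x * pderiv i g x + g x * pderiv i f x := by
  simp [pderiv, fderiv_fun_mul hf hg]

theorem pderiv_comp {φ : ℝ → ℝ} {φ' : ℝ} (hφ : HasDerivAt φ φ' (f x))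
    (hf : DifferentiableAt ℝ f x) : pderiv i (fun y => φ (f y)) x = φ' * pderiv i f x := by
  simp [pderiv, (hφ.comp_hasFDerivAt_of_eq x hf.hasFDerivAt rfl).fderiv, ← Function.comp_def φ f]

theorem pderiv_comp_add_smul (f : En n → ℝ) (a : En n) (s : ℝ) (x : En n) :
    pderiv i (fun y => f (a + s • y)) x = s * pderiv i f (a + s • x) := by
  simp [pderiv, fderiv_comp_smul (f := fun y => f (a + y)), fderiv_comp_add_left]

theorem contDiffAt_pderiv {k : ℕ} (hf : ContDiffAt ℝ (k + 1) f x) :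
    ContDiffAt ℝ k (pderiv i f) x :=
  (hf.fderiv_right le_rfl).clm_apply contDiffAt_const

theorem lap_congr (h : f =ᶠ[𝓝 x] g) : lap f x = lap g x :=
  Finset.sum_congr rfl fun _ _ => (pderiv_congr (pderiv_congr h)).eq_of_nhds

theorem lap_neg (f : En n → ℝ) (x : En n) : lap (fun y => -f y) x = -lap f x := by
  simp [lap, fderiv_fun_neg]

theorem lap_comp_add_smul (f : En n → ℝ) (a : En n) (s : ℝ) (x : En n) :
    lap (fun y => f (a + s • y)) x = s ^ 2 * lap f (a + s • x) := by
  simp_rw [lap_eq_sum_pderiv, Finset.mul_sum]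
  refine Finset.sum_congr rfl fun i _ => ?_
  have hsecond := pderiv_comp_add_smul (i := i) (pderiv i f) a s x
  rw [funext (pderiv_comp_add_smul f a s), sq, mul_assoc, ← hsecond]
  exact DFunLike.congr_fun (congrFun (fderiv_const_smul_field s) x) (EuclideanSpace.single i 1)

theorem lap_comp {φ φ' : ℝ → ℝ} {φ'' : ℝ} (hφ : ∀ t, HasDerivAt φ (φ' t) t)
    (hφ' : HasDerivAt φ' φ'' (f x)) (hf : ContDiffAt ℝ 2 f x) :
    lap (fun y => φ (f y)) x = φ' (f x) * lap f x + φ'' * ∑ i, pderiv i f x ^ 2 := by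
  have hdiff : ∀ᶠ y in 𝓝 x, DifferentiableAt ℝ f y :=
    (hf.eventually (by simp)).mono fun y hy => hy.differentiableAt (by norm_num)
  have hpderiv (i : Fin n) : pderiv i (fun y => φ (f y)) =ᶠ[𝓝 x] fun y => φ' (f y) * pderiv i f y :=
    hdiff.mono fun y hy => pderiv_comp (hφ (f y)) hy
  have hsecond (i : Fin n) : pderiv i (pderiv i fun y => φ (f y)) x =
      φ' (f x) * pderiv i (pderiv i f) x + φ'' * pderiv i f x ^ 2 := by
    have hfx := hdiff.self_of_nhds
    have hpf : DifferentiableAt ℝ (pderiv i f) x :=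
      (contDiffAt_pderiv (k := 1) (by convert hf using 1; norm_num)).differentiableAt (by norm_num)
    rw [(pderiv_congr (hpderiv i)).eq_of_nhds,
      pderiv_mul (f := fun y => φ' (f y))
        (hφ'.comp_hasFDerivAt x hfx.hasFDerivAt).differentiableAt hpf,
      pderiv_comp hφ' hfx]
    ring
  simp only [lap_eq_sum_pderiv, hsecond, Finset.sum_add_distrib, Finset.mul_sum]

end Laplacian

section IntegrationByParts

variable {n : ℕ} {φ g v : En n → ℝ}

theorem integral_mul_pderiv (hφ : ContDiff ℝ 1 φ) (hsupp : HasCompactSupport φ)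
    (hg : ContDiff ℝ 1 g) (i : Fin n) :
    ∫ y, φ y * pderiv i g y = -∫ y, pderiv i φ y * g y := by
  have hpderiv {f : En n → ℝ} (hf : ContDiff ℝ 1 f) : Continuous (pderiv i f) :=
    (hf.continuous_fderiv one_ne_zero).clm_apply continuous_const
  refine integral_mul_fderiv_eq_neg_fderiv_mul_of_integrable ?_ ?_ ?_
    (fun y _ => hφ.differentiable one_ne_zero y) (fun y _ => hg.differentiable one_ne_zero y)
  · exact ((hpderiv hφ).mul hg.continuous).integrable_of_hasCompactSupport
      ((hsupp.fderiv_apply ℝ _).mul_right)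
  · exact (hφ.continuous.mul (hpderiv hg)).integrable_of_hasCompactSupport hsupp.mul_right
  · exact (hφ.continuous.mul hg.continuous).integrable_of_hasCompactSupport hsupp.mul_right

theorem integral_mul_lap (hφ : ContDiff ℝ 1 φ) (hsupp : HasCompactSupport φ)
    (hv : ContDiff ℝ 2 v) :
    ∫ y, φ y * lap v y = -∫ y, ∑ i, pderiv i φ y * pderiv i v y := by
  have hpv (i : Fin n) : ContDiff ℝ 1 (pderiv i v) :=
    (hv.fderiv_right (by norm_num)).clm_apply contDiff_const
  have hpderiv {f : En n → ℝ} (hf : ContDiff ℝ 1 f) (i : Fin n) : Continuous (pderiv i f) :=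
    (hf.continuous_fderiv one_ne_zero).clm_apply continuous_const
  simp_rw [lap_eq_sum_pderiv, Finset.mul_sum]
  rw [integral_finsetSum, integral_finsetSum, ← Finset.sum_neg_distrib]
  · exact Finset.sum_congr rfl fun i _ => integral_mul_pderiv hφ hsupp (hpv i) i
  · exact fun i _ => ((hpderiv hφ i).mul (hpv i).continuous).integrable_of_hasCompactSupport
      ((hsupp.fderiv_apply ℝ _).mul_right)
  · exact fun i _ => (hφ.continuous.mul (hpderiv (hpv i) i)).integrable_of_hasCompactSupport
      hsupp.mul_right

end IntegrationByParts

theorem hasDerivAt_integral_mul_comp_add_smul {n : ℕ} {w v : En n → ℝ} (hw : Continuous w)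
    (hsupp : HasCompactSupport w) (hv : ContDiff ℝ 1 v) (x : En n) (s : ℝ) :
    HasDerivAt (fun s : ℝ => ∫ y, w y * v (x + s • y))
      (∫ y, w y * fderiv ℝ v (x + s • y) y) s := by
  have hcont : Continuous fun p : ℝ × En n => fderiv ℝ v (x + p.1 • p.2) p.2 :=
    ((hv.continuous_fderiv one_ne_zero).comp (by fun_prop)).clm_apply (by fun_prop)
  obtain ⟨C, hC⟩ := ((isCompact_closedBall s 1).prod hsupp).exists_bound_of_continuousOn
    hcont.continuousOn
  have hint (t : ℝ) : Integrable fun y => w y * v (x + t • y) :=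
    (hw.mul (hv.continuous.comp (by fun_prop))).integrable_of_hasCompactSupport hsupp.mul_right
  refine (hasDerivAt_integral_of_dominated_loc_of_deriv_le (μ := (volume : Measure (En n)))
    (F := fun s y => w y * v (x + s • y)) (F' := fun s y => w y * fderiv ℝ v (x + s • y) y)
    (s := ball s 1) (bound := fun y => ‖w y‖ * C) (ball_mem_nhds s one_pos)
    (Eventually.of_forall fun t => (hint t).aestronglyMeasurable) (hint s) ?_ ?_ ?_ ?_).2
  · exact (hw.mul (hcont.comp (f := fun y => (s, y)) (by fun_prop))).aestronglyMeasurable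
  · refine Eventually.of_forall fun y t ht => ?_
    by_cases hy : y ∈ tsupport w
    · rw [norm_mul]
      exact mul_le_mul_of_nonneg_left (hC (t, y) ⟨ball_subset_closedBall ht, hy⟩) (norm_nonneg _)
    · simp [image_eq_zero_of_notMem_tsupport hy]
  · exact (hw.integrable_of_hasCompactSupport hsupp).norm.mul_const C
  · refine Eventually.of_forall fun y t _ => HasDerivAt.const_mul _ ?_
    have hline : HasDerivAt (fun t : ℝ => x + t • y) y t := by
      simpa using ((hasDerivAt_id t).smul_const y).const_add x
    exact (hv.differentiable one_ne_zero (x + t • y)).hasFDerivAt.comp_hasDerivAt t hline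

section Bump

variable {n : ℕ} {x y : En n} {R : ℝ}

/-- The paraboloid bump `(1 - |y|²)₊`, whose rescalings are the averaging kernels of the mean value
inequality. It is chosen because `∇(b²) = -4 b y`, so that Green's formula against `b²` computes
radial derivatives averaged against `b`. -/
def bump (y : En n) : ℝ := max (1 - ‖y‖ ^ 2) 0

theorem bump_nonneg (y : En n) : 0 ≤ bump y := le_max_right _ _

theorem bump_le_one (y : En n) : bump y ≤ 1 :=
  max_le (by linarith [sq_nonneg ‖y‖]) zero_le_one

theorem continuous_bump : Continuous (bump (n := n)) := by
  unfold bump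
  fun_prop

theorem bump_eq_zero (hy : 1 ≤ ‖y‖) : bump y = 0 :=
  max_eq_right (by nlinarith)

theorem one_sub_sq_le_bump {a : ℝ} (hy : ‖y‖ ≤ a) : 1 - a ^ 2 ≤ bump y :=
  le_max_of_le_left (by nlinarith [norm_nonneg y])

theorem hasCompactSupport_bump : HasCompactSupport (bump (n := n)) := by
  refine HasCompactSupport.intro (isCompact_closedBall (0 : En n) 1) fun y hy => bump_eq_zero ?_
  simpa using (not_le.1 (mt mem_closedBall.2 hy)).le

theorem fderiv_bump_sq (y v : En n) :
    fderiv ℝ (fun y => bump y ^ 2) y v = -4 * bump y * inner ℝ y v := by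
  have hinner : HasFDerivAt (fun y : En n => 1 - ‖y‖ ^ 2) (-(2 • innerSL ℝ y)) y :=
    (hasStrictFDerivAt_norm_sq y).hasFDerivAt.const_sub 1
  have hpow : HasDerivAt (fun s : ℝ => max s 0 ^ 2) (2 * bump y) (1 - ‖y‖ ^ 2) := by
    simpa [bump] using hasDerivAt_max_zero_pow 0 (1 - ‖y‖ ^ 2)
  change fderiv ℝ ((fun s : ℝ => max s 0 ^ 2) ∘ fun y : En n => 1 - ‖y‖ ^ 2) y v = _
  rw [(hpow.comp_hasFDerivAt y hinner).fderiv]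
  simp
  ring

theorem integral_bump_mul_fderiv {v : En n → ℝ} (hv : ContDiff ℝ 2 v) :
    ∫ y, bump y * fderiv ℝ v y y = (1 / 4) * ∫ y, bump y ^ 2 * lap v y := by
  have hsq : ContDiff ℝ 1 fun y : En n => bump y ^ 2 :=
    (contDiff_max_zero_pow 1).comp (contDiff_const.sub (contDiff_norm_sq ℝ))
  have hsupp : HasCompactSupport fun y : En n => bump y ^ 2 :=
    hasCompactSupport_bump.comp_left (g := fun s => s ^ 2) (zero_pow two_ne_zero)
  have hgreen := integral_mul_lap hsq hsupp hv
  have hgrad (y : En n) : ∑ i, pderiv i (fun y => bump y ^ 2) y * pderiv i v y =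
      -4 * (bump y * fderiv ℝ v y y) := by
    simp only [fderiv_apply_eq_sum_pderiv v y y, Finset.mul_sum]
    refine Finset.sum_congr rfl fun i _ => ?_
    simp only [pderiv, fderiv_bump_sq, EuclideanSpace.inner_single_right]
    simp
    ring
  simp only [hgrad, integral_const_mul] at hgreen
  linarith

theorem mul_integral_bump_le_integral {v : En n → ℝ} (hv : ContDiff ℝ 2 v) (hR : 0 ≤ R)
    (hlap : ∀ y ∈ closedBall x R, 0 ≤ lap v y) :
    v x * ∫ y : En n, bump y ≤ ∫ y, bump y * v (x + R • y) := by
  have hderiv (s : ℝ) := hasDerivAt_integral_mul_comp_add_smul continuous_bump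
    hasCompactSupport_bump (hv.of_le one_le_two) x s
  have hmono : MonotoneOn (fun s : ℝ => ∫ y, bump y * v (x + s • y)) (Icc 0 R) := by
    refine monotoneOn_of_deriv_nonneg (convex_Icc 0 R)
      (fun s _ => (hderiv s).continuousAt.continuousWithinAt)
      (fun s _ => (hderiv s).differentiableAt.differentiableWithinAt) fun s hs => ?_
    rw [interior_Icc] at hs
    have hparts := integral_bump_mul_fderiv (v := fun y => v (x + s • y)) (by fun_prop)
    have hfderiv (y : En n) : fderiv ℝ (fun z => v (x + s • z)) y y =
        s * fderiv ℝ v (x + s • y) y := by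
      simp only [fderiv_apply_eq_sum_pderiv, pderiv_comp_add_smul, Finset.mul_sum, mul_left_comm]
    simp only [hfderiv, lap_comp_add_smul, mul_left_comm (bump _), integral_const_mul] at hparts
    have hnonneg : 0 ≤ ∫ y, bump y ^ 2 * (s ^ 2 * lap v (x + s • y)) := by
      refine integral_nonneg fun y => ?_
      rcases le_or_gt 1 ‖y‖ with hy | hy
      · simp [bump_eq_zero hy]
      · refine mul_nonneg (sq_nonneg _) (mul_nonneg (sq_nonneg _) (hlap _ ?_))
        rw [mem_closedBall, dist_eq_norm, add_sub_cancel_left, norm_smul,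
          Real.norm_of_nonneg hs.1.le]
        nlinarith [hs.1, hs.2, norm_nonneg y]
    rw [(hderiv s).deriv]
    exact (mul_nonneg_iff_of_pos_left hs.1).1 (by linarith)
  have := hmono (left_mem_Icc.2 hR) (right_mem_Icc.2 hR) hR
  simp only [zero_smul, add_zero, integral_mul_const] at this
  rwa [mul_comm]

theorem integral_bump_pos (n : ℕ) : 0 < ∫ y : En n, bump y :=
  continuous_bump.integral_pos_of_hasCompactSupport_nonneg_nonzero hasCompactSupport_bump
    bump_nonneg (x := 0) (by simp [bump])

end Bump

theorem exists_contDiff_eventuallyEq_nhdsSet {E F : Type*} [NormedAddCommGroup E] [NormedSpace ℝ E]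
    [FiniteDimensional ℝ E] [NormedAddCommGroup F] [NormedSpace ℝ F] {k : ℕ} {f : E → F}
    {K U : Set E} (hK : IsClosed K) (hU : IsOpen U) (hKU : K ⊆ U) (hf : ContDiffOn ℝ k f U) :
    ∃ g : E → F, ContDiff ℝ k g ∧ g =ᶠ[𝓝ˢ K] f := by
  obtain ⟨χ, hχ0, hχ1, -⟩ := exists_contMDiffMap_zero_one_nhds_of_isClosed (n := k)
    (modelWithCornersSelf ℝ E) hU.isClosed_compl hK (disjoint_compl_left_iff_subset.2 hKU)
  refine ⟨fun y => χ y • f y, contDiff_iff_contDiffAt.2 fun y => ?_,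
    hχ1.mono fun y hy => by simp [hy]⟩
  by_cases hy : y ∈ U
  · exact χ.contMDiff.contDiff.contDiffAt.smul (hf.contDiffAt (hU.mem_nhds hy))
  · refine contDiffAt_const.congr_of_eventuallyEq (f := fun _ => 0) ?_
    filter_upwards [mem_nhdsSet_iff_forall.1 hχ0 y hy] with z hz
    simp [show χ z = 0 from hz]

section AveragingKernel

variable {n : ℕ} {x y : En n} {R : ℝ} {f v : En n → ℝ}

/-- The probability density on `closedBall x R` obtained by rescaling `bump`. -/
def avgKernel (x : En n) (R : ℝ) (y : En n) : ℝ :=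
  bump (R⁻¹ • (y - x)) / (R ^ n * ∫ z : En n, bump z)

theorem norm_inv_smul_sub (hR : 0 < R) (x y : En n) : ‖R⁻¹ • (y - x)‖ = dist y x / R := by
  rw [norm_smul, norm_inv, Real.norm_of_nonneg hR.le, dist_eq_norm, div_eq_inv_mul]

theorem pow_mul_integral_bump_pos (n : ℕ) (hR : 0 < R) : 0 < R ^ n * ∫ z : En n, bump z :=
  mul_pos (pow_pos hR n) (integral_bump_pos n)

theorem continuous_avgKernel (x : En n) (R : ℝ) : Continuous (avgKernel x R) :=
  (continuous_bump.comp (by fun_prop)).div_const _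

theorem avgKernel_nonneg (hR : 0 < R) (x y : En n) : 0 ≤ avgKernel x R y :=
  div_nonneg (bump_nonneg _) (pow_mul_integral_bump_pos n hR).le

theorem avgKernel_le (hR : 0 < R) (x y : En n) :
    avgKernel x R y ≤ (R ^ n * ∫ z : En n, bump z)⁻¹ := by
  rw [← one_div]
  exact div_le_div_of_nonneg_right (bump_le_one _) (pow_mul_integral_bump_pos n hR).le

theorem le_avgKernel {a : ℝ} (hR : 0 < R) (hy : dist y x ≤ a * R) :
    (1 - a ^ 2) / (R ^ n * ∫ z : En n, bump z) ≤ avgKernel x R y := by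
  refine div_le_div_of_nonneg_right (one_sub_sq_le_bump ?_) (pow_mul_integral_bump_pos n hR).le
  rwa [norm_inv_smul_sub hR, div_le_iff₀ hR]

theorem support_avgKernel_subset (hR : 0 < R) : Function.support (avgKernel x R) ⊆ ball x R := by
  refine fun y hy => mem_ball.2 (not_le.1 fun hRy => hy ?_)
  rw [avgKernel, bump_eq_zero, zero_div]
  rwa [norm_inv_smul_sub hR, le_div_iff₀ hR, one_mul]

theorem avgKernel_le_mul_avgKernel {s : ℝ} (hs : 0 < s) (hy : dist y x ≤ s) (z : En n) :
    avgKernel y (2 * s) z ≤ 3 * 2 ^ n * avgKernel x (4 * s) z := by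
  have hs2 : 0 < 2 * s := by positivity
  have hs4 : 0 < 4 * s := by positivity
  by_cases hz : avgKernel y (2 * s) z = 0
  · rw [hz]
    exact mul_nonneg (by positivity) (avgKernel_nonneg hs4 x z)
  have hzy := mem_ball.1 (support_avgKernel_subset hs2 hz)
  calc
    avgKernel y (2 * s) z ≤ ((2 * s) ^ n * ∫ z : En n, bump z)⁻¹ := avgKernel_le hs2 y z
    _ ≤ 21 / 16 * ((2 * s) ^ n * ∫ z : En n, bump z)⁻¹ :=
      le_mul_of_one_le_left (inv_nonneg.2 (pow_mul_integral_bump_pos n hs2).le) (by norm_num)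
    _ = 3 * 2 ^ n * ((1 - (3 / 4) ^ 2) / ((4 * s) ^ n * ∫ z : En n, bump z)) := by
      rw [show 4 * s = 2 * (2 * s) by ring, mul_pow 2 (2 * s)]
      field_simp
      norm_num
    _ ≤ 3 * 2 ^ n * avgKernel x (4 * s) z :=
      mul_le_mul_of_nonneg_left (le_avgKernel hs4 (by linarith [dist_triangle z y x]))
        (by positivity)

theorem integrable_avgKernel_mul (hR : 0 < R) (hf : ContinuousOn f (closedBall x R)) :
    Integrable fun y => avgKernel x R y * f y := by
  have hsupp : (Function.support fun y => avgKernel x R y * f y) ⊆ closedBall x R :=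
    (Function.support_mul_subset_left _ _).trans
      ((support_avgKernel_subset hR).trans ball_subset_closedBall)
  exact (integrableOn_iff_integrable_of_support_subset hsupp).1
    (((continuous_avgKernel x R).continuousOn.mul hf).integrableOn_compact
      (isCompact_closedBall x R))

theorem integral_avgKernel_mul (hR : 0 < R) (x : En n) (v : En n → ℝ) :
    ∫ y, avgKernel x R y * v y =
      (∫ y : En n, bump y)⁻¹ * ∫ y : En n, bump y * v (x + R • y) := by
  have hscale := Measure.integral_comp_smul (volume : Measure (En n))
    (fun z => bump (R⁻¹ • z) * v (x + z)) R
  simp only [smul_smul, inv_mul_cancel₀ hR.ne', one_smul] at hscale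
  rw [hscale, ← integral_add_left_eq_self _ x]
  simp only [avgKernel, add_sub_cancel_left, finrank_euclideanSpace_fin, smul_eq_mul,
    div_mul_eq_mul_div, integral_div]
  rw [abs_of_nonneg (by positivity), div_eq_inv_mul, mul_inv]
  ring

theorem integral_avgKernel (hR : 0 < R) (x : En n) : ∫ y, avgKernel x R y = 1 := by
  simpa [(integral_bump_pos n).ne'] using integral_avgKernel_mul hR x fun _ => 1

theorem integral_avgKernel_mul_congr (hR : 0 < R) (hfv : EqOn f v (closedBall x R)) :
    ∫ y, avgKernel x R y * f y = ∫ y, avgKernel x R y * v y := by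
  refine integral_congr_ae (Eventually.of_forall fun y => ?_)
  by_cases hy : avgKernel x R y = 0
  · simp [hy]
  · simp only [hfv (ball_subset_closedBall (support_avgKernel_subset hR hy))]

theorem le_integral_avgKernel_mul (hR : 0 < R) (hv : ContDiff ℝ 2 v)
    (hlap : ∀ y ∈ closedBall x R, 0 ≤ lap v y) : v x ≤ ∫ y, avgKernel x R y * v y := by
  rw [integral_avgKernel_mul hR, ← div_eq_inv_mul, le_div_iff₀ (integral_bump_pos n)]
  exact mul_integral_bump_le_integral hv hR.le hlap

end AveragingKernel

namespace IsHarmonicOn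

variable {n : ℕ} {U : Set (En n)} {u : En n → ℝ} {x y : En n} {R s : ℝ}

theorem eq_integral_avgKernel_mul (hu : IsHarmonicOn u U) (hU : IsOpen U) (hR : 0 < R)
    (hball : closedBall x R ⊆ U) : u x = ∫ y, avgKernel x R y * u y := by
  obtain ⟨v, hv, hvu⟩ :=
    exists_contDiff_eventuallyEq_nhdsSet (k := 2) isClosed_closedBall hU hball hu.1
  have hnhds : ∀ y ∈ closedBall x R, v =ᶠ[𝓝 y] u := mem_nhdsSet_iff_forall.1 hvu
  have hlap : ∀ y ∈ closedBall x R, lap v y = 0 := fun y hy => by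
    rw [lap_congr (hnhds y hy), hu.2 y (hball hy)]
  have hsub := le_integral_avgKernel_mul hR hv fun y hy => (hlap y hy).ge
  have hsuper := le_integral_avgKernel_mul hR (v := fun y => -v y) hv.neg fun y hy => by
    rw [lap_neg, hlap y hy, neg_zero]
  simp only [mul_neg, integral_neg, neg_le_neg_iff] at hsuper
  rw [← (hnhds x (mem_closedBall_self hR.le)).eq_of_nhds,
    ← integral_avgKernel_mul_congr hR fun y hy => (hnhds y hy).eq_of_nhds]
  exact le_antisymm hsub hsuper

theorem harnack (hu : IsHarmonicOn u U) (hU : IsOpen U) (hnonneg : ∀ z ∈ U, 0 ≤ u z) (hs : 0 < s)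
    (hball : closedBall x (4 * s) ⊆ U) (hy : dist y x ≤ s) : u y ≤ 3 * 2 ^ n * u x := by
  have hs2 : 0 < 2 * s := by positivity
  have hs4 : 0 < 4 * s := by positivity
  have hball' : closedBall y (2 * s) ⊆ U :=
    (closedBall_subset_closedBall' (by linarith)).trans hball
  have hint {p : En n} {ρ : ℝ} (hρ : 0 < ρ) (hp : closedBall p ρ ⊆ U) :
      Integrable fun z => avgKernel p ρ z * u z :=
    integrable_avgKernel_mul hρ (hu.1.continuousOn.mono hp)
  rw [hu.eq_integral_avgKernel_mul hU hs4 hball, hu.eq_integral_avgKernel_mul hU hs2 hball',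
    ← integral_const_mul]
  refine integral_mono (hint hs2 hball') ((hint hs4 hball).const_mul _) fun z => ?_
  rw [← mul_assoc]
  by_cases hz : z ∈ U
  · exact mul_le_mul_of_nonneg_right (avgKernel_le_mul_avgKernel hs hy z) (hnonneg z hz)
  · have hzero {p : En n} {ρ : ℝ} (hρ : 0 < ρ) (hp : closedBall p ρ ⊆ U) : avgKernel p ρ z = 0 :=
      Function.notMem_support.1 fun h =>
        hz (hp (ball_subset_closedBall (support_avgKernel_subset hρ h)))
    simp [hzero hs2 hball', hzero hs4 hball]

end IsHarmonicOn

theorem ball_subset_of_le_infDist_frontier {E : Type*} [NormedAddCommGroup E] [NormedSpace ℝ E]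
    {U : Set E} (hU : IsOpen U) {x : E} (hx : x ∈ U) {d : ℝ} (hd : d ≤ infDist x (frontier U)) :
    ball x d ⊆ U := by
  rcases le_or_gt d 0 with hd0 | hd0
  · simp [ball_eq_empty.2 hd0]
  refine (convex_ball x d).isPreconnected.subset_of_closure_inter_subset hU
    ⟨x, mem_ball_self hd0, hx⟩ fun y ⟨hyU, hyd⟩ => by_contra fun hy => ?_
  have hyf : y ∈ frontier U := hU.frontier_eq ▸ ⟨hyU, hy⟩
  exact (hd.trans (infDist_le_dist_of_mem hyf)).not_gt (mem_ball'.1 hyd)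

theorem exists_dist_eq_add_eVariationOn_le {X : Type*} [PseudoMetricSpace X] {γ : ℝ → X}
    {a b ρ : ℝ} (hab : a ≤ b) (hγ : ContinuousOn γ (Icc a b)) (hρ : 0 ≤ ρ)
    (hfar : ρ ≤ dist (γ a) (γ b)) :
    ∃ t ∈ Icc a b, dist (γ a) (γ t) = ρ ∧
      ENNReal.ofReal ρ + eVariationOn γ (Icc t b) ≤ eVariationOn γ (Icc a b) := by
  have hdist : ContinuousOn (fun t => dist (γ a) (γ t)) (Icc a b) := by fun_prop
  obtain ⟨t, ht, hdt⟩ := intermediate_value_Icc hab hdist ⟨by simpa using hρ, hfar⟩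
  refine ⟨t, ht, hdt, ?_⟩
  have hsplit := eVariationOn.Icc_add_Icc γ (s := univ) ht.1 ht.2 (mem_univ t)
  simp only [univ_inter] at hsplit
  rw [← hsplit, ← (show dist (γ a) (γ t) = ρ from hdt), ← edist_dist]
  gcongr
  exact eVariationOn.edist_le γ (left_mem_Icc.2 ht.1) (right_mem_Icc.2 ht.1)

theorem one_le_three_mul_two_pow (n : ℕ) : (1 : ℝ) ≤ 3 * 2 ^ n := by
  linarith [one_le_pow₀ (one_le_two (α := ℝ)) (n := n)]

theorem IsHarmonicOn.harnack_curve {n : ℕ} {U : Set (En n)} {u : En n → ℝ}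
    (hu : IsHarmonicOn u U) (hU : IsOpen U) (hnonneg : ∀ z ∈ U, 0 ≤ u z) {γ : ℝ → En n} {b ρ : ℝ}
    (hρ : 0 < ρ) {N : ℕ} : ∀ {a : ℝ}, a ≤ b → ContinuousOn γ (Icc a b) →
      (∀ t ∈ Icc a b, closedBall (γ t) (4 * ρ) ⊆ U) →
      eVariationOn γ (Icc a b) ≤ ENNReal.ofReal (N * ρ) →
      u (γ a) ≤ (3 * 2 ^ n) ^ (N + 1) * u (γ b) := by
  have hone : (1 : ℝ) ≤ 3 * 2 ^ n := one_le_three_mul_two_pow n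
  induction N with
  | zero =>
    intro a hab _ hball hlen
    have hdist : edist (γ a) (γ b) ≤ 0 :=
      (eVariationOn.edist_le γ (left_mem_Icc.2 hab) (right_mem_Icc.2 hab)).trans
        (by simpa using hlen)
    rw [edist_le_zero.1 hdist, zero_add, pow_one]
    exact le_mul_of_one_le_left
      (hnonneg _ (hball b (right_mem_Icc.2 hab) (mem_closedBall_self (by positivity)))) hone
  | succ N ih =>
    intro a hab hγ hball hlen
    have hbU : γ b ∈ U := hball b (right_mem_Icc.2 hab) (mem_closedBall_self (by positivity))
    rcases le_total (dist (γ a) (γ b)) ρ with hnear | hfar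
    · refine (hu.harnack hU hnonneg hρ (hball b (right_mem_Icc.2 hab)) hnear).trans ?_
      exact mul_le_mul_of_nonneg_right (le_self_pow₀ hone (by omega)) (hnonneg _ hbU)
    · obtain ⟨t, ht, hdist, hadd⟩ := exists_dist_eq_add_eVariationOn_le hab hγ hρ.le hfar
      have hsub : Icc t b ⊆ Icc a b := Icc_subset_Icc_left ht.1
      have hrest : eVariationOn γ (Icc t b) ≤ ENNReal.ofReal (N * ρ) := by
        have hN : ((N + 1 : ℕ) : ℝ) * ρ = ρ + N * ρ := by push_cast; ring
        rw [hN, ENNReal.ofReal_add hρ.le (by positivity)] at hlen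
        exact (ENNReal.add_le_add_iff_left ENNReal.ofReal_ne_top).1 (hadd.trans hlen)
      calc
        u (γ a) ≤ 3 * 2 ^ n * u (γ t) := hu.harnack hU hnonneg hρ (hball t ht) hdist.le
        _ ≤ 3 * 2 ^ n * ((3 * 2 ^ n) ^ (N + 1) * u (γ b)) := by
          gcongr
          exact ih ht.2 (hγ.mono hsub) (fun t ht => hball t (hsub ht)) hrest
        _ = (3 * 2 ^ n) ^ (N + 1 + 1) * u (γ b) := by ring

/-- The Harnack constant of a `(c,C)`-uniform domain for points at distance at most `K * d` from
each other and at least `d` from the boundary: along a connecting curve it suffices to apply the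
Harnack inequality once per step of length `c * d / 16`. -/
def harnackConst (n : ℕ) (c C K : ℝ) : ℝ := (3 * 2 ^ n) ^ (⌈16 * C * K / c⌉₊ + 1)

theorem one_le_harnackConst (n : ℕ) (c C K : ℝ) : 1 ≤ harnackConst n c C K :=
  one_le_pow₀ (one_le_three_mul_two_pow n)

namespace IsUniformDomain

variable {n : ℕ} {c C d : ℝ} {U : Set (En n)} {x y z : En n}

theorem exists_curve_mul_le_infDist (hU : IsUniformDomain c C U) (hc : 0 ≤ c) (hc1 : c ≤ 1)
    (hy : y ∈ U) (hz : z ∈ U) (hdy : d ≤ infDist y (frontier U))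
    (hdz : d ≤ infDist z (frontier U)) :
    ∃ γ : ℝ → En n, IsCurveIn U y z γ ∧ curveLength γ ≤ ENNReal.ofReal (C * dist y z) ∧
      ∀ t ∈ Icc (0 : ℝ) 1, c * d / 2 ≤ infDist (γ t) (frontier U) := by
  obtain ⟨γ, hγ, hlen, hdist⟩ := hU.2.2 y hy z hz
  refine ⟨γ, hγ, hlen, fun t ht => ?_⟩
  rcases le_or_gt (d / 2) (min (dist y (γ t)) (dist (γ t) z)) with hmid | hend
  · nlinarith [hdist t ht]
  have hd : 0 ≤ d := by
    linarith [(le_min (dist_nonneg (x := y) (y := γ t)) dist_nonneg).trans_lt hend]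
  have hhalf : c * d / 2 ≤ d / 2 := by nlinarith
  rcases min_lt_iff.1 hend with h | h
  · linarith [infDist_le_infDist_add_dist (s := frontier U) (x := y) (y := γ t)]
  · linarith [infDist_le_infDist_add_dist (s := frontier U) (x := z) (y := γ t), dist_comm z (γ t)]

theorem harnack (hU : IsUniformDomain c C U) (hc : 0 < c) (hc1 : c ≤ 1) (hC : 0 ≤ C)
    {u : En n → ℝ} (hu : IsHarmonicOn u U) (hnonneg : ∀ z ∈ U, 0 ≤ u z) (hy : y ∈ U) (hz : z ∈ U)
    (hd : 0 < d) (hdy : d ≤ infDist y (frontier U)) (hdz : d ≤ infDist z (frontier U)) {K : ℝ}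
    (hyz : dist y z ≤ K * d) : u y ≤ harnackConst n c C K * u z := by
  obtain ⟨γ, ⟨hγ, hγU, rfl, rfl⟩, hlen, hdist⟩ :=
    hU.exists_curve_mul_le_infDist hc.le hc1 hy hz hdy hdz
  refine hu.harnack_curve hU.1 hnonneg (ρ := c * d / 16) (by positivity) zero_le_one hγ
    (fun t ht => ?_) (hlen.trans (ENNReal.ofReal_le_ofReal ?_))
  · exact (closedBall_subset_ball (by linarith [mul_pos hc hd])).trans
      (ball_subset_of_le_infDist_frontier hU.1 (hγU ht) (hdist t ht))
  · calc
      C * dist (γ 0) (γ 1) ≤ C * (K * d) := by gcongr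
      _ = 16 * C * K / c * (c * d / 16) := by field_simp
      _ ≤ ⌈16 * C * K / c⌉₊ * (c * d / 16) := by gcongr; exact Nat.le_ceil _

theorem exists_dist_eq_mul_le_infDist (hU : IsUniformDomain c C U)
    (hbdd : ¬Bornology.IsBounded U) (hc : 0 ≤ c) (hx : x ∈ U) {R : ℝ} (hR : 0 ≤ R) :
    ∃ z ∈ U, dist x z = R ∧ c * R ≤ infDist z (frontier U) := by
  obtain ⟨p, hp, hpR⟩ : ∃ p ∈ U, 2 * R < dist x p := by
    by_contra! h
    exact hbdd (isBounded_closedBall.subset fun p hp => mem_closedBall'.2 (h p hp))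
  obtain ⟨γ, ⟨hγ, hγU, hγ0, hγ1⟩, -, hdist⟩ := hU.2.2 x hx p hp
  have hcont : ContinuousOn (fun t => dist x (γ t)) (Icc 0 1) := by fun_prop
  obtain ⟨t, ht, htR : dist x (γ t) = R⟩ := intermediate_value_Icc zero_le_one hcont
    (show R ∈ Icc _ _ from ⟨by simpa [hγ0] using hR, by simp only [hγ1]; linarith⟩)
  refine ⟨γ t, hγU ht, htR, (mul_le_mul_of_nonneg_left (le_min htR.ge ?_) hc).trans (hdist t ht)⟩
  linarith [dist_triangle x (γ t) p]

end IsUniformDomain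

namespace IsUniformDomain

variable {n : ℕ} {c C : ℝ} {U : Set (En n)} {u : En n → ℝ} {x y z : En n} {δ r : ℝ}

theorem exists_le_pow_mul (hU : IsUniformDomain c C U) (hbdd : ¬Bornology.IsBounded U)
    (hc : 0 < c) (hc1 : c ≤ 1) (hC : 0 ≤ C) (hu : IsHarmonicOn u U) (hnonneg : ∀ z ∈ U, 0 ≤ u z)
    (hy : y ∈ U) (hδ : 0 < δ) (hδy : δ ≤ infDist y (frontier U)) (k : ℕ) :
    ∃ p ∈ U, dist y p ≤ 2 ^ k * δ ∧ c * (2 ^ k * δ) ≤ infDist p (frontier U) ∧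
      u y ≤ harnackConst n c C (3 / c) ^ k * u p := by
  have hA : 0 ≤ harnackConst n c C (3 / c) := zero_le_one.trans (one_le_harnackConst n c C _)
  induction k with
  | zero => exact ⟨y, hy, by simp [hδ.le], by nlinarith, by simp⟩
  | succ k ih =>
    obtain ⟨p, hp, hyp, hdp, hup⟩ := ih
    obtain ⟨q, hq, hyq, hdq⟩ := hU.exists_dist_eq_mul_le_infDist hbdd hc.le hy
      (R := 2 ^ (k + 1) * δ) (by positivity)
    have hk : 0 < c * (2 ^ k * δ) := by positivity
    have hdist : dist p q ≤ 3 / c * (c * (2 ^ k * δ)) := by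
      calc
        dist p q ≤ 2 ^ k * δ + 2 ^ (k + 1) * δ :=
          (dist_triangle_left p q y).trans (add_le_add hyp hyq.le)
        _ = 3 / c * (c * (2 ^ k * δ)) := by field_simp; ring
    have hpq := hU.harnack hc hc1 hC hu hnonneg hp hq hk hdp
      (by rw [pow_succ] at hdq; linarith) hdist
    refine ⟨q, hq, hyq.le, hdq, ?_⟩
    calc
      u y ≤ harnackConst n c C (3 / c) ^ k * u p := hup
      _ ≤ harnackConst n c C (3 / c) ^ k * (harnackConst n c C (3 / c) * u q) := by gcongr
      _ = harnackConst n c C (3 / c) ^ (k + 1) * u q := by ring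

theorem le_mul_div_pow_mul (hU : IsUniformDomain c C U) (hbdd : ¬Bornology.IsBounded U)
    (hc : 0 < c) (hc1 : c ≤ 1) (hC : 0 ≤ C) (hu : IsHarmonicOn u U) (hnonneg : ∀ z ∈ U, 0 ≤ u z)
    {q : ℕ} (hq : harnackConst n c C (3 / c) ≤ 2 ^ q) (hy : y ∈ U) (hz : z ∈ U) (hδ : 0 < δ)
    (hδr : δ ≤ r) (hdy : δ ≤ infDist y (frontier U)) (hdz : c * r / 8 ≤ infDist z (frontier U))
    (hyz : dist y z ≤ 4 * r) : u y ≤ harnackConst n c C (40 / c) * (r / δ) ^ q * u z := by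
  obtain ⟨N, hN, hN'⟩ := exists_nat_pow_near ((one_le_div hδ).2 hδr) one_lt_two
  rw [le_div_iff₀ hδ] at hN
  rw [div_lt_iff₀ hδ, pow_succ] at hN'
  have hr : 0 < r := hδ.trans_le hδr
  obtain ⟨p, hp, hyp, hdp, hup⟩ :=
    hU.exists_le_pow_mul hbdd hc hc1 hC hu hnonneg hy hδ hdy N
  have hA : 0 ≤ harnackConst n c C (3 / c) := zero_le_one.trans (one_le_harnackConst n c C _)
  have hA' : 0 ≤ harnackConst n c C (40 / c) := zero_le_one.trans (one_le_harnackConst n c C _)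
  have hdist : dist p z ≤ 40 / c * (c * r / 8) := by
    calc
      dist p z ≤ r + 4 * r := (dist_triangle_left p z y).trans (add_le_add (hyp.trans hN) hyz)
      _ = 40 / c * (c * r / 8) := by field_simp; norm_num
  have hpz := hU.harnack hc hc1 hC hu hnonneg hp hz (by positivity) (by nlinarith) hdz hdist
  calc
    u y ≤ harnackConst n c C (3 / c) ^ N * u p := hup
    _ ≤ (2 ^ q) ^ N * (harnackConst n c C (40 / c) * u z) := by
      gcongr
      exact hnonneg p hp
    _ = harnackConst n c C (40 / c) * (2 ^ N) ^ q * u z := by ring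
    _ ≤ harnackConst n c C (40 / c) * (r / δ) ^ q * u z := by
      gcongr
      · exact hnonneg z hz
      · rwa [le_div_iff₀ hδ]

theorem exists_closedBall_subset (hU : IsUniformDomain c C U) (hbdd : ¬Bornology.IsBounded U)
    (hc : 0 < c) (hc1 : c ≤ 1) (hx : x ∈ U) {R : ℝ} (hR : 0 < R) :
    ∃ p, closedBall p (c / 4 * R) ⊆ closedBall x (3 / 4 * R) ∧ closedBall p (c / 4 * R) ⊆ U ∧
      ∀ w ∈ closedBall p (c / 4 * R), c / 4 * R ≤ infDist w (frontier U) := by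
  obtain ⟨p, hp, hxp, hdp⟩ :=
    hU.exists_dist_eq_mul_le_infDist hbdd hc.le hx (R := R / 2) (by positivity)
  refine ⟨p, closedBall_subset_closedBall' ?_, ?_, fun w hw => ?_⟩
  · rw [dist_comm, hxp]
    nlinarith
  · exact (closedBall_subset_ball (by nlinarith)).trans
      (ball_subset_of_le_infDist_frontier hU.1 hp hdp)
  · linarith [infDist_le_infDist_add_dist (s := frontier U) (x := p) (y := w), mem_closedBall'.1 hw]

end IsUniformDomain

theorem volume_real_closedBall_pos (n : ℕ) :
    0 < (volume : Measure (En n)).real (closedBall 0 1) :=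
  ENNReal.toReal_pos (measure_closedBall_pos volume _ one_pos).ne' measure_closedBall_lt_top.ne

section Domar

variable {n : ℕ} {a R : ℝ} {x z : En n} {f : En n → ℝ}

/-- A lower bound, independent of the radius `R`, for the mass that `avgKernel x R` gives to a ball
of radius `a * R` inside `closedBall x (3 / 4 * R)`. -/
def holeMass (n : ℕ) (a : ℝ) : ℝ :=
  7 / 16 * a ^ n * (volume : Measure (En n)).real (closedBall 0 1) / ∫ z : En n, bump z

theorem holeMass_pos (n : ℕ) (ha : 0 < a) : 0 < holeMass n a := by
  have hvol := volume_real_closedBall_pos n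
  have := integral_bump_pos n
  unfold holeMass
  positivity

theorem holeMass_le_setIntegral_avgKernel (ha : 0 ≤ a) (hR : 0 < R)
    (hz : closedBall z (a * R) ⊆ closedBall x (3 / 4 * R)) :
    holeMass n a ≤ ∫ y in closedBall z (a * R), avgKernel x R y := by
  have hvol : (volume : Measure (En n)).real (closedBall z (a * R)) =
      (a * R) ^ n * (volume : Measure (En n)).real (closedBall 0 1) := by
    simpa using Measure.addHaar_real_closedBall' volume z (mul_nonneg ha hR.le)
  calc
    holeMass n a = (1 - (3 / 4) ^ 2) / (R ^ n * ∫ z : En n, bump z) *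
        (volume : Measure (En n)).real (closedBall z (a * R)) := by
      rw [hvol, holeMass, mul_pow]
      field_simp
      ring
    _ ≤ ∫ y in closedBall z (a * R), avgKernel x R y :=
      setIntegral_ge_of_const_le_real measurableSet_closedBall measure_closedBall_lt_top.ne
        (fun y hy => le_avgKernel hR (mem_closedBall.1 (hz hy)))
        ((continuous_avgKernel x R).continuousOn.integrableOn_compact (isCompact_closedBall _ _))

theorem exists_mul_le_of_le_half_on_closedBall (ha : 0 < a) (hR : 0 < R)
    (hf : ContinuousOn f (closedBall x R)) (hfx : 0 < f x)
    (hmean : f x ≤ ∫ y, avgKernel x R y * f y)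
    (hz : closedBall z (a * R) ⊆ closedBall x (3 / 4 * R))
    (hhalf : ∀ p ∈ closedBall z (a * R), f p ≤ f x / 2) :
    ∃ x' ∈ closedBall x R, (1 + holeMass n a / 4) * f x ≤ f x' := by
  by_contra! hlt
  set b := 1 + holeMass n a / 4 with hb
  set S := closedBall z (a * R)
  have hmass := holeMass_pos n ha
  have hint (t : ℝ) : Integrable fun p => avgKernel x R p * t :=
    integrable_avgKernel_mul hR continuousOn_const
  have hbound (p : En n) : avgKernel x R p * f p ≤
      avgKernel x R p * (b * f x) - S.indicator (fun p => avgKernel x R p * (f x / 2)) p := by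
    have hK := avgKernel_nonneg hR x p
    by_cases hpS : p ∈ S
    · rw [indicator_of_mem hpS, ← mul_sub]
      exact mul_le_mul_of_nonneg_left (by nlinarith [hhalf p hpS]) hK
    · rw [indicator_of_notMem hpS, sub_zero]
      by_cases hp : avgKernel x R p = 0
      · simp [hp]
      · exact mul_le_mul_of_nonneg_left
          (hlt p (ball_subset_closedBall (support_avgKernel_subset hR hp))).le hK
  have hupper : f x ≤ b * f x - holeMass n a * (f x / 2) := by
    calc
      f x ≤ ∫ p, avgKernel x R p * f p := hmean
      _ ≤ ∫ p, (avgKernel x R p * (b * f x) -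
          S.indicator (fun p => avgKernel x R p * (f x / 2)) p) :=
        integral_mono (integrable_avgKernel_mul hR hf)
          ((hint _).sub ((hint _).indicator measurableSet_closedBall)) hbound
      _ = b * f x - (∫ p in S, avgKernel x R p) * (f x / 2) := by
        rw [integral_sub (hint _) ((hint _).indicator measurableSet_closedBall),
          integral_indicator measurableSet_closedBall, integral_mul_const, integral_mul_const,
          integral_avgKernel hR, one_mul]
      _ ≤ b * f x - holeMass n a * (f x / 2) := by
        gcongr
        exact holeMass_le_setIntegral_avgKernel ha.le hR hz
  nlinarith [mul_pos hmass hfx]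

theorem lt_of_forall_exists_mul_pow_le {X : Type*} [PseudoMetricSpace X] {f : X → ℝ} {y : X}
    {M b θ r : ℝ} (hM : 0 < M) (hb : 1 < b) (hθ : 0 ≤ θ) (hr : 0 ≤ r)
    (hbdd : BddAbove (f '' closedBall y r))
    (hstep : ∀ (k : ℕ), ∀ x ∈ closedBall y r, M * b ^ k ≤ f x →
      ∃ x' ∈ closedBall x ((1 - θ) * r * θ ^ k), M * b ^ (k + 1) ≤ f x') : f y < M := by
  by_contra! hy
  have hball {x : X} {k : ℕ} (hx : dist x y ≤ r * (1 - θ ^ k)) : x ∈ closedBall y r :=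
    hx.trans (mul_le_of_le_one_right hr (by linarith [pow_nonneg hθ k]))
  have hseq (k : ℕ) : ∃ x, dist x y ≤ r * (1 - θ ^ k) ∧ M * b ^ k ≤ f x := by
    induction k with
    | zero => exact ⟨y, by simp, by simpa using hy⟩
    | succ k ih =>
      obtain ⟨x, hx, hMx⟩ := ih
      obtain ⟨x', hx', hMx'⟩ := hstep k x (hball hx) hMx
      refine ⟨x', (dist_triangle x' x y).trans ?_, hMx'⟩
      calc
        dist x' x + dist x y ≤ (1 - θ) * r * θ ^ k + r * (1 - θ ^ k) := add_le_add hx' hx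
        _ = r * (1 - θ ^ (k + 1)) := by ring
  obtain ⟨B, hB⟩ := hbdd
  obtain ⟨k, hk⟩ := pow_unbounded_of_one_lt (B / M) hb
  obtain ⟨x, hx, hMx⟩ := hseq k
  rw [div_lt_iff₀' hM] at hk
  exact (hMx.trans (hB (mem_image_of_mem f (hball hx)))).not_gt hk

end Domar

/-- `g` is a harmonic profile of `U` extended by zero: the extension is what turns `g` into a
globally defined continuous function satisfying sub-mean value inequalities at all points. -/
structure IsHarmonicProfile {n : ℕ} (U : Set (En n)) (g : En n → ℝ) : Prop where
  continuous : Continuous g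
  pos : ∀ z ∈ U, 0 < g z
  eq_zero : ∀ z ∉ U, g z = 0
  isHarmonicOn : IsHarmonicOn g U

theorem isHarmonicProfile_indicator {n : ℕ} {U : Set (En n)} {h : En n → ℝ} (hU : IsOpen U)
    (hcont : ContinuousOn h (closure U)) (hpos : ∀ z ∈ U, 0 < h z) (hharm : IsHarmonicOn h U)
    (hzero : ∀ z ∈ frontier U, h z = 0) : IsHarmonicProfile U (U.indicator h) where
  continuous := continuous_indicator hzero hcont
  pos z hz := by simpa [hz] using hpos z hz
  eq_zero z hz := indicator_of_notMem hz h
  isHarmonicOn := by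
    refine ⟨hharm.1.congr (eqOn_indicator (f := h)), fun z hz => ?_⟩
    have heq : U.indicator h =ᶠ[𝓝 z] h :=
      (eqOn_indicator (f := h)).eventuallyEq_of_mem (hU.mem_nhds hz)
    rw [lap_congr heq, hharm.2 z hz]

namespace IsHarmonicProfile

variable {n : ℕ} {U : Set (En n)} {g : En n → ℝ}

theorem nonneg (hg : IsHarmonicProfile U g) (z : En n) : 0 ≤ g z := by
  by_cases hz : z ∈ U
  · exact (hg.pos z hz).le
  · exact (hg.eq_zero z hz).ge

theorem contDiffAt (hg : IsHarmonicProfile U g) (hU : IsOpen U) {z : En n} (hz : z ∈ U) :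
    ContDiffAt ℝ 2 g z :=
  hg.isHarmonicOn.1.contDiffAt (hU.mem_nhds hz)

theorem max_sub_pow_three_eventuallyEq_zero (hg : IsHarmonicProfile U g) {ε : ℝ} (hε : 0 < ε)
    {z : En n} (hz : z ∉ U) : (fun y => max (g y - ε) 0 ^ 3) =ᶠ[𝓝 z] fun _ => 0 := by
  have hlt : ∀ᶠ y in 𝓝 z, g y < ε :=
    hg.continuous.continuousAt.eventually_lt_const (by rwa [hg.eq_zero z hz])
  filter_upwards [hlt] with y hy
  rw [max_eq_right (by linarith), zero_pow three_ne_zero]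

theorem contDiff_max_sub_pow_three (hg : IsHarmonicProfile U g) (hU : IsOpen U) {ε : ℝ}
    (hε : 0 < ε) : ContDiff ℝ 2 fun y => max (g y - ε) 0 ^ 3 := by
  refine contDiff_iff_contDiffAt.2 fun z => ?_
  by_cases hz : z ∈ U
  · exact (contDiff_max_zero_pow 2).contDiffAt.comp z ((hg.contDiffAt hU hz).sub contDiffAt_const)
  · exact contDiffAt_const.congr_of_eventuallyEq (hg.max_sub_pow_three_eventuallyEq_zero hε hz)

theorem lap_max_sub_pow_three_nonneg (hg : IsHarmonicProfile U g) (hU : IsOpen U) {ε : ℝ}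
    (hε : 0 < ε) (z : En n) : 0 ≤ lap (fun y => max (g y - ε) 0 ^ 3) z := by
  by_cases hz : z ∈ U
  · have hderiv (t : ℝ) : HasDerivAt (fun t => max (t - ε) 0 ^ 3) (3 * max (t - ε) 0 ^ 2) t := by
      refine ((hasDerivAt_max_zero_pow 1 (t - ε)).comp_sub_const t ε).congr_deriv ?_
      norm_num
    have hderiv2 :
        HasDerivAt (fun t => 3 * max (t - ε) 0 ^ 2) (3 * (2 * max (g z - ε) 0)) (g z) := by
      simpa using ((hasDerivAt_max_zero_pow 0 (g z - ε)).comp_sub_const (g z) ε).const_mul 3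
    rw [lap_comp hderiv hderiv2 (hg.contDiffAt hU hz), hg.isHarmonicOn.2 z hz]
    positivity
  · rw [lap_congr (hg.max_sub_pow_three_eventuallyEq_zero hε hz)]
    simp [lap]

-- The cube makes the truncation `(g - ε)₊ ^ 3` of class `C²`, so no theory of merely continuous
-- subharmonic functions is needed.
theorem pow_three_le_integral (hg : IsHarmonicProfile U g) (hU : IsOpen U) (x : En n) {R : ℝ}
    (hR : 0 < R) : g x ^ 3 ≤ ∫ y, avgKernel x R y * g y ^ 3 := by
  have htrunc : ∀ ε > 0, max (g x - ε) 0 ^ 3 ≤ ∫ y, avgKernel x R y * g y ^ 3 := fun ε hε => by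
    have hsmooth := hg.contDiff_max_sub_pow_three hU hε
    refine (le_integral_avgKernel_mul hR hsmooth fun y _ =>
      hg.lap_max_sub_pow_three_nonneg hU hε y).trans ?_
    refine integral_mono (integrable_avgKernel_mul hR hsmooth.continuous.continuousOn)
      (integrable_avgKernel_mul hR (hg.continuous.pow 3).continuousOn) fun y => ?_
    refine mul_le_mul_of_nonneg_left ?_ (avgKernel_nonneg hR x y)
    exact pow_le_pow_left₀ (le_max_right _ _) (max_le (by linarith) (hg.nonneg y)) 3
  have hlim : Tendsto (fun ε : ℝ => max (g x - ε) 0 ^ 3) (𝓝[>] 0) (𝓝 (g x ^ 3)) := by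
    have hcont : Continuous fun ε : ℝ => max (g x - ε) 0 ^ 3 := by fun_prop
    simpa [max_eq_left (hg.nonneg x)] using (hcont.tendsto 0).mono_left nhdsWithin_le_nhds
  exact le_of_tendsto hlim (eventually_nhdsWithin_of_forall htrunc)

theorem exists_mul_pow_three_le {c C R r : ℝ} {q : ℕ} {x z : En n} (hg : IsHarmonicProfile U g)
    (hU : IsUniformDomain c C U) (hbdd : ¬Bornology.IsBounded U) (hc : 0 < c) (hc1 : c ≤ 1)
    (hC : 0 ≤ C) (hq : harnackConst n c C (3 / c) ≤ 2 ^ q) (hz : z ∈ U)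
    (hdz : c * r / 8 ≤ infDist z (frontier U)) (hR : 0 < R) (hRr : R ≤ r) (hxz : dist x z ≤ 3 * r)
    (hlarge : 2 * (harnackConst n c C (40 / c) * (r / (c / 4 * R)) ^ q * g z) ^ 3 ≤ g x ^ 3) :
    ∃ x' ∈ closedBall x R, (1 + holeMass n (c / 4) / 4) * g x ^ 3 ≤ g x' ^ 3 := by
  have hr : 0 < r := hR.trans_le hRr
  have hgx : 0 < g x ^ 3 := by
    have hA := one_le_harnackConst n c C (40 / c)
    have hgz := hg.pos z hz
    exact lt_of_lt_of_le (by positivity) hlarge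
  have hx : x ∈ U := by
    by_contra hx
    simp [hg.eq_zero x hx] at hgx
  obtain ⟨p, hpx, hpU, hpd⟩ := hU.exists_closedBall_subset hbdd hc hc1 hx hR
  refine exists_mul_le_of_le_half_on_closedBall (f := fun y => g y ^ 3) (by positivity) hR
    (hg.continuous.pow 3).continuousOn hgx (hg.pow_three_le_integral hU.1 x hR) hpx fun w hw => ?_
  have hwx : dist w x ≤ 3 / 4 * R := hpx hw
  have hgw := hU.le_mul_div_pow_mul hbdd hc hc1 hC hg.isHarmonicOn (fun y _ => hg.nonneg y) hq
    (hpU hw) hz (by positivity) (by nlinarith) (hpd w hw) hdz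
    (by linarith [dist_triangle w x z])
  linarith [pow_le_pow_left₀ (hg.nonneg w) hgw 3]

theorem pow_three_lt_two_mul {c C r β : ℝ} {q : ℕ} {y z : En n} (hg : IsHarmonicProfile U g)
    (hU : IsUniformDomain c C U) (hbdd : ¬Bornology.IsBounded U) (hc : 0 < c) (hc1 : c ≤ 1)
    (hC : 0 ≤ C) (hq : harnackConst n c C (3 / c) ≤ 2 ^ q) (hβ : 1 < β)
    (hβq : β ^ (q * 3) ≤ 1 + holeMass n (c / 4) / 4) (hz : z ∈ U) (hr : 0 < r)
    (hdz : c * r / 8 ≤ infDist z (frontier U)) (hyz : dist y z ≤ 2 * r) :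
    g y ^ 3 < 2 * (harnackConst n c C (40 / c) * (4 / (c * (1 - β⁻¹))) ^ q * g z) ^ 3 := by
  set K := harnackConst n c C (40 / c) * (4 / (c * (1 - β⁻¹))) ^ q with hKdef
  set b := 1 + holeMass n (c / 4) / 4
  have hb : 1 < b := lt_add_of_pos_right 1 (div_pos (holeMass_pos n (by positivity)) four_pos)
  have hβ0 : 0 < β := one_pos.trans hβ
  have hθ1 : β⁻¹ < 1 := inv_lt_one_of_one_lt₀ hβ
  have hKz : 0 < K * g z :=
    mul_pos (mul_pos (by linarith [one_le_harnackConst n c C (40 / c)]) (by positivity))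
      (hg.pos z hz)
  refine lt_of_forall_exists_mul_pow_le (f := fun x => g x ^ 3) (θ := β⁻¹) (by positivity)
    hb (by positivity) hr.le
    ((isCompact_closedBall y r).bddAbove_image (hg.continuous.pow 3).continuousOn)
    fun k x hx hgx => ?_
  set R := (1 - β⁻¹) * r * β⁻¹ ^ k with hR
  have hR0 : 0 < R := by positivity
  have hRr : R ≤ r :=
    (mul_le_of_le_one_right (by positivity) (pow_le_one₀ (by positivity) hθ1.le)).trans
      (mul_le_of_le_one_left hr.le (by linarith [inv_pos.2 hβ0]))
  have hscale : harnackConst n c C (40 / c) * (r / (c / 4 * R)) ^ q = K * (β ^ k) ^ q := by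
    rw [hKdef, mul_assoc, ← mul_pow, hR, inv_pow]
    congr 2
    field_simp
  have hlarge : 2 * (K * (β ^ k) ^ q * g z) ^ 3 ≤ g x ^ 3 :=
    calc
      2 * (K * (β ^ k) ^ q * g z) ^ 3 = 2 * (K * g z) ^ 3 * (β ^ (q * 3)) ^ k := by ring
      _ ≤ 2 * (K * g z) ^ 3 * b ^ k := by gcongr
      _ ≤ g x ^ 3 := hgx
  obtain ⟨x', hx', hgx'⟩ := hg.exists_mul_pow_three_le hU hbdd hc hc1 hC hq hz hdz hR0 hRr
    (by linarith [dist_triangle x y z, mem_closedBall.1 hx]) (hscale ▸ hlarge)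
  refine ⟨x', hx', le_trans ?_ hgx'⟩
  calc
    2 * (K * g z) ^ 3 * b ^ (k + 1) = b * (2 * (K * g z) ^ 3 * b ^ k) := by ring
    _ ≤ b * g x ^ 3 := by gcongr

end IsHarmonicProfile

theorem exists_one_lt_pow_le {b : ℝ} (hb : 1 < b) (k : ℕ) : ∃ β > 1, β ^ k ≤ b := by
  have hlt : ∀ᶠ β : ℝ in 𝓝[>] 1, β ^ k < b :=
    ((continuous_pow k).continuousAt.eventually_lt_const (by simpa using hb)).filter_mono
      nhdsWithin_le_nhds
  obtain ⟨β, hβ, hβ1⟩ := (hlt.and self_mem_nhdsWithin).exists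
  exact ⟨β, hβ1, hβ.le⟩

theorem exists_carleson_const (n : ℕ) {c C : ℝ} (hc : 0 < c) (hc1 : c ≤ 1) (hC : 0 ≤ C) :
    ∃ K : ℝ, ∀ (U : Set (En n)) (g : En n → ℝ), IsUniformDomain c C U →
      ¬Bornology.IsBounded U → IsHarmonicProfile U g → ∀ y, ∀ z ∈ U, ∀ r : ℝ, 0 < r →
        c * r / 8 ≤ infDist z (frontier U) → dist y z ≤ 2 * r → g y ≤ K * g z := by
  obtain ⟨q, hq⟩ := pow_unbounded_of_one_lt (harnackConst n c C (3 / c)) one_lt_two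
  obtain ⟨β, hβ, hβq⟩ := exists_one_lt_pow_le
    (lt_add_of_pos_right 1 (div_pos (holeMass_pos n (a := c / 4) (by positivity)) four_pos)) (q * 3)
  set K := harnackConst n c C (40 / c) * (4 / (c * (1 - β⁻¹))) ^ q
  have hgap : 0 < 1 - β⁻¹ := sub_pos.2 (inv_lt_one_of_one_lt₀ hβ)
  have hK : 0 ≤ K := mul_nonneg (by linarith [one_le_harnackConst n c C (40 / c)]) (by positivity)
  refine ⟨2 * K, fun U g hU hbdd hg y z hz r hr hdz hyz => ?_⟩
  have hcube := hg.pow_three_lt_two_mul hU hbdd hc hc1 hC hq.le hβ hβq hz hr hdz hyz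
  have hKz : 0 ≤ K * g z := mul_nonneg hK (hg.nonneg z)
  refine le_of_pow_le_pow_left₀ three_ne_zero (by linarith) (hcube.le.trans ?_)
  rw [mul_assoc, mul_pow]
  linarith [pow_nonneg hKz 3]

section InnerMetric

variable {X : Type*} {γ₁ γ₂ : ℝ → X}

/-- The concatenation of two curves parametrized by `[0,1]`, each run at double speed. -/
def curveTrans (γ₁ γ₂ : ℝ → X) (t : ℝ) : X := if t ≤ 1 / 2 then γ₁ (2 * t) else γ₂ (2 * t - 1)

theorem eqOn_curveTrans_left (γ₁ γ₂ : ℝ → X) :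
    EqOn (curveTrans γ₁ γ₂) (γ₁ ∘ fun t => 2 * t) (Icc 0 (1 / 2)) := fun _ ht => if_pos ht.2

theorem eqOn_curveTrans_right (h : γ₁ 1 = γ₂ 0) :
    EqOn (curveTrans γ₁ γ₂) (γ₂ ∘ fun t => 2 * t - 1) (Icc (1 / 2) 1) := fun t ht => by
  rcases ht.1.eq_or_lt with rfl | hlt
  · simp [curveTrans, h]
  · exact if_neg hlt.not_ge

theorem mapsTo_two_mul_Icc : MapsTo (fun t : ℝ => 2 * t) (Icc 0 (1 / 2)) (Icc 0 1) :=
  fun _ ht => ⟨by linarith [ht.1], by linarith [ht.2]⟩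

theorem mapsTo_two_mul_sub_one_Icc :
    MapsTo (fun t : ℝ => 2 * t - 1) (Icc (1 / 2) 1) (Icc 0 1) :=
  fun _ ht => ⟨by linarith [ht.1], by linarith [ht.2]⟩

variable [PseudoEMetricSpace X] {Ω : Set X} {x y z : X}

theorem IsCurveIn.curveTrans (h₁ : IsCurveIn Ω x y γ₁) (h₂ : IsCurveIn Ω y z γ₂) :
    IsCurveIn Ω x z (curveTrans γ₁ γ₂) := by
  obtain ⟨hcont₁, hmaps₁, hγ₁0, hγ₁1⟩ := h₁
  obtain ⟨hcont₂, hmaps₂, hγ₂0, hγ₂1⟩ := h₂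
  have hleft := eqOn_curveTrans_left γ₁ γ₂
  have hright := eqOn_curveTrans_right (hγ₁1.trans hγ₂0.symm)
  have hunion : Icc (0 : ℝ) 1 = Icc 0 (1 / 2) ∪ Icc (1 / 2) 1 := by
    rw [Icc_union_Icc_eq_Icc] <;> norm_num
  refine ⟨?_, ?_, ?_, ?_⟩
  · rw [hunion]
    exact ContinuousOn.union_of_isClosed
      ((hcont₁.comp (by fun_prop) mapsTo_two_mul_Icc).congr hleft)
      ((hcont₂.comp (by fun_prop) mapsTo_two_mul_sub_one_Icc).congr hright)
      isClosed_Icc isClosed_Icc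
  · rw [hunion, mapsTo_union]
    exact ⟨(hmaps₁.comp mapsTo_two_mul_Icc).congr hleft.symm,
      (hmaps₂.comp mapsTo_two_mul_sub_one_Icc).congr hright.symm⟩
  · simp [hleft (show (0 : ℝ) ∈ Icc 0 (1 / 2) by norm_num), hγ₁0]
  · norm_num [hright (show (1 : ℝ) ∈ Icc (1 / 2) 1 by norm_num), hγ₂1]

theorem curveLength_curveTrans_le (h : γ₁ 1 = γ₂ 0) :
    curveLength (curveTrans γ₁ γ₂) ≤ curveLength γ₁ + curveLength γ₂ := by
  have hsplit := eVariationOn.Icc_add_Icc (curveTrans γ₁ γ₂) (s := univ)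
    (show (0 : ℝ) ≤ 1 / 2 by norm_num) (show (1 / 2 : ℝ) ≤ 1 by norm_num) (mem_univ _)
  simp only [univ_inter] at hsplit
  rw [curveLength, ← hsplit, eVariationOn.congr (eqOn_curveTrans_left γ₁ γ₂),
    eVariationOn.congr (eqOn_curveTrans_right h)]
  refine add_le_add ?_ ?_
  · exact eVariationOn.comp_le_of_monotoneOn _ _
      (fun s _ t _ hst => mul_le_mul_of_nonneg_left hst zero_le_two) mapsTo_two_mul_Icc
  · exact eVariationOn.comp_le_of_monotoneOn _ _
      (fun s _ t _ hst => sub_le_sub_right (mul_le_mul_of_nonneg_left hst zero_le_two) 1)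
      mapsTo_two_mul_sub_one_Icc

theorem innerDist_triangle (Ω : Set X) (x y z : X) :
    innerDist Ω x z ≤ innerDist Ω x y + innerDist Ω y z := by
  simp only [innerDist, ENNReal.iInf_add, ENNReal.add_iInf]
  refine le_iInf₂ fun γ₂ h₂ => le_iInf₂ fun γ₁ h₁ => ?_
  exact (iInf₂_le _ (h₁.curveTrans h₂)).trans
    (curveLength_curveTrans_le (h₁.2.2.2.trans h₂.2.2.1.symm))

theorem edist_le_innerDist (Ω : Set X) (x y : X) : edist x y ≤ innerDist Ω x y := by
  refine le_iInf₂ fun γ ⟨_, _, hγ0, hγ1⟩ => ?_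
  rw [← hγ0, ← hγ1]
  exact eVariationOn.edist_le γ (left_mem_Icc.2 zero_le_one) (right_mem_Icc.2 zero_le_one)

/-- The open ball of the inner metric of `Ω`, written `B_Ω(x, r)` on paper. -/
def innerBall (Ω : Set X) (x : X) (r : ℝ≥0∞) : Set X := {y | y ∈ Ω ∧ innerDist Ω x y < r}

end InnerMetric

theorem innerBall_ofReal_subset_closedBall {X : Type*} [PseudoMetricSpace X] {U : Set X} {x : X}
    {r : ℝ} (hr : 0 ≤ r) :
    innerBall U x (ENNReal.ofReal r) ⊆ closedBall x r := fun y hy => by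
  rw [mem_closedBall', ← edist_le_ofReal hr]
  exact (edist_le_innerDist U x y).trans hy.2.le

section InnerMetricNormed

variable {E : Type*} [NormedAddCommGroup E] [NormedSpace ℝ E] {U : Set E} {x y z : E}

theorem curveLength_lineMap_le (y z : E) :
    curveLength (AffineMap.lineMap y z : ℝ → E) ≤ edist y z := by
  have hlip : LipschitzOnWith (nndist y z) (AffineMap.lineMap y z : ℝ → E) univ :=
    (lipschitzWith_lineMap y z).lipschitzOnWith
  calc
    curveLength (AffineMap.lineMap y z : ℝ → E)
      ≤ nndist y z * eVariationOn id (Icc (0 : ℝ) 1) :=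
        hlip.comp_eVariationOn_le (f := AffineMap.lineMap y z) (g := id) (mapsTo_univ _ _)
    _ ≤ nndist y z * 1 := by
      gcongr
      simp
    _ = edist y z := by rw [mul_one, edist_nndist]

theorem innerDist_le_edist (hsegment : segment ℝ y z ⊆ U) : innerDist U y z ≤ edist y z := by
  have hcurve : IsCurveIn U y z (AffineMap.lineMap y z : ℝ → E) :=
    ⟨AffineMap.lineMap_continuous.continuousOn,
      mapsTo_iff_image_subset.2 (segment_eq_image_lineMap ℝ y z ▸ hsegment), by simp, by simp⟩
  exact (iInf₂_le _ hcurve).trans (curveLength_lineMap_le y z)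

theorem isOpen_innerBall (hU : IsOpen U) (x : E) (r : ℝ≥0∞) : IsOpen (innerBall U x r) := by
  refine isOpen_iff_mem_nhds.2 fun y ⟨hy, hyr⟩ => ?_
  obtain ⟨ε, hε, hεU⟩ := Metric.isOpen_iff.1 hU y hy
  have hsum : Tendsto (fun z => innerDist U x y + edist y z) (𝓝 y) (𝓝 (innerDist U x y)) := by
    have hcont : Continuous fun z => innerDist U x y + edist y z := by fun_prop
    simpa using hcont.tendsto y
  filter_upwards [ball_mem_nhds y hε, hsum.eventually_lt_const hyr] with z hz hzr
  have hsegment : segment ℝ y z ⊆ U :=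
    ((convex_ball y ε).segment_subset (mem_ball_self hε) hz).trans hεU
  refine ⟨hεU hz, lt_of_le_of_lt ?_ hzr⟩
  exact (innerDist_triangle U x y z).trans (by gcongr; exact innerDist_le_edist hsegment)

theorem closedBall_subset_innerBall {s : ℝ} {r : ℝ≥0∞} (hs : 0 ≤ s) (hU : closedBall z s ⊆ U)
    (hlt : innerDist U x z + ENNReal.ofReal s < r) : closedBall z s ⊆ innerBall U x r := by
  refine fun y hy => ⟨hU hy, lt_of_le_of_lt ?_ hlt⟩
  have hsegment : segment ℝ z y ⊆ U :=
    ((convex_closedBall z s).segment_subset (mem_closedBall_self hs) hy).trans hU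
  calc
    innerDist U x y ≤ innerDist U x z + innerDist U z y := innerDist_triangle U x z y
    _ ≤ innerDist U x z + ENNReal.ofReal s := by
      gcongr
      rw [mem_closedBall', ← edist_le_ofReal hs] at hy
      exact (innerDist_le_edist hsegment).trans hy

end InnerMetricNormed

section VolumeEstimates

variable {n : ℕ} {S : Set (En n)} {f : En n → ℝ} {x z : En n} {r s M : ℝ}

theorem setIntegral_sq_le_of_subset_closedBall (hr : 0 ≤ r) (hS : S ⊆ closedBall x r)
    (hM : ∀ y ∈ S, |f y| ≤ M) :
    ∫ y in S, f y ^ 2 ≤ (volume : Measure (En n)).real (closedBall 0 1) * M ^ 2 * r ^ n := by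
  have hfin : volume (closedBall x r) < ∞ := measure_closedBall_lt_top
  calc
    ∫ y in S, f y ^ 2 ≤ M ^ 2 * (volume : Measure (En n)).real S := by
      refine (Real.le_norm_self _).trans
        (norm_setIntegral_le_of_norm_le_const ((measure_mono hS).trans_lt hfin) fun y hy => ?_)
      rw [Real.norm_eq_abs, abs_sq, ← sq_abs]
      exact pow_le_pow_left₀ (abs_nonneg _) (hM y hy) 2
    _ ≤ M ^ 2 * (volume : Measure (En n)).real (closedBall x r) := by
      gcongr
      exact hfin.ne
    _ = (volume : Measure (En n)).real (closedBall 0 1) * M ^ 2 * r ^ n := by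
      rw [Measure.addHaar_real_closedBall' volume x hr, finrank_euclideanSpace_fin]
      ring

theorem le_setIntegral_sq_of_closedBall_subset (hs : 0 ≤ s) (hS : closedBall z s ⊆ S)
    (hf : IntegrableOn (fun y => f y ^ 2) S) (hM0 : 0 ≤ M) (hM : ∀ y ∈ closedBall z s, M ≤ f y) :
    (volume : Measure (En n)).real (closedBall 0 1) * M ^ 2 * s ^ n ≤ ∫ y in S, f y ^ 2 := by
  calc
    (volume : Measure (En n)).real (closedBall 0 1) * M ^ 2 * s ^ n =
        M ^ 2 * (volume : Measure (En n)).real (closedBall z s) := by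
      rw [Measure.addHaar_real_closedBall' volume z hs, finrank_euclideanSpace_fin]
      ring
    _ ≤ ∫ y in closedBall z s, f y ^ 2 :=
      setIntegral_ge_of_const_le_real measurableSet_closedBall measure_closedBall_lt_top.ne
        (fun y hy => pow_le_pow_left₀ hM0 (hM y hy) 2) (hf.mono_set hS)
    _ ≤ ∫ y in S, f y ^ 2 :=
      setIntegral_mono_set hf (ae_of_all _ fun y => sq_nonneg (f y)) hS.eventuallyLE

end VolumeEstimates

namespace IsHarmonicProfile

variable {n : ℕ} {U : Set (En n)} {g : En n → ℝ} {c r : ℝ} {x z : En n}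

theorem div_le_of_mem_closedBall (hg : IsHarmonicProfile U g) (hU : IsOpen U) {s : ℝ} (hs : 0 < s)
    (hball : closedBall z (5 * s) ⊆ U) {y : En n} (hy : y ∈ closedBall z s) :
    g z / (3 * 2 ^ n) ≤ g y := by
  rw [div_le_iff₀' (by positivity)]
  refine hg.isHarmonicOn.harnack hU (fun y _ => hg.nonneg y) hs
    ((closedBall_subset_closedBall' ?_).trans hball) (mem_closedBall'.1 hy)
  linarith [mem_closedBall.1 hy]

theorem le_setIntegral_innerBall (hg : IsHarmonicProfile U g) (hU : IsOpen U) (hc : 0 < c)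
    (hc1 : c ≤ 1) (hr : 0 < r) (hz : z ∈ U) (hxz : innerDist U x z ≤ ENNReal.ofReal (r / 4))
    (hdz : c * r / 8 ≤ infDist z (frontier U)) :
    (volume : Measure (En n)).real (closedBall 0 1) / (3 * 2 ^ n) ^ 2 * (c / 64) ^ n * g z ^ 2 *
      r ^ n ≤ ∫ y in innerBall U x (ENNReal.ofReal r), g y ^ 2 := by
  have hs : 0 < c / 64 * r := by positivity
  have hball : closedBall z (5 * (c / 64 * r)) ⊆ U :=
    (closedBall_subset_ball (by linarith)).trans (ball_subset_of_le_infDist_frontier hU hz hdz)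
  refine Eq.trans_le (by ring) (le_setIntegral_sq_of_closedBall_subset hs.le ?_ ?_
    (div_nonneg (hg.nonneg z) (by positivity)) fun y hy =>
      hg.div_le_of_mem_closedBall hU hs hball hy)
  · refine closedBall_subset_innerBall hs.le
      ((closedBall_subset_closedBall (by linarith)).trans hball) ?_
    calc
      innerDist U x z + ENNReal.ofReal (c / 64 * r)
        ≤ ENNReal.ofReal (r / 4) + ENNReal.ofReal (c / 64 * r) := by gcongr
      _ = ENNReal.ofReal (r / 4 + c / 64 * r) := (ENNReal.ofReal_add (by positivity) hs.le).symm
      _ < ENNReal.ofReal r := (ENNReal.ofReal_lt_ofReal_iff hr).2 (by nlinarith)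
  · exact ((hg.continuous.pow 2).continuousOn.integrableOn_compact
      (isCompact_closedBall x r)).mono_set (innerBall_ofReal_subset_closedBall hr.le)

theorem setIntegral_innerBall_le (hg : IsHarmonicProfile U g) {K : ℝ}
    (hK : ∀ y, dist y z ≤ 2 * r → g y ≤ K * g z) (hr : 0 ≤ r)
    (hxz : innerDist U x z ≤ ENNReal.ofReal (r / 4)) :
    ∫ y in innerBall U x (ENNReal.ofReal r), g y ^ 2 ≤
      (volume : Measure (En n)).real (closedBall 0 1) * K ^ 2 * g z ^ 2 * r ^ n := by
  have hdist : dist x z ≤ r / 4 := by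
    rw [← edist_le_ofReal (by positivity)]
    exact (edist_le_innerDist U x z).trans hxz
  have hsub := innerBall_ofReal_subset_closedBall (U := U) (x := x) hr
  refine (setIntegral_sq_le_of_subset_closedBall (M := K * g z) hr hsub fun y hy => ?_).trans_eq
    (by ring)
  rw [abs_of_nonneg (hg.nonneg y)]
  exact hK y (by linarith [dist_triangle y x z, mem_closedBall.1 (hsub hy)])

end IsHarmonicProfile

/-- Two-sided volume estimate `∫_{B_U(x,r)} h² dλ ≍ h(x_r)² rⁿ` for a harmonic
profile `h` of an unbounded uniform domain in `ℝⁿ`. -/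
theorem statement4 (n : ℕ) (hn : 1 ≤ n) (cu Cu : ℝ)
    (hcu : cu ∈ Set.Ioo (0:ℝ) 1) (hCu : 1 < Cu) :
    ∃ A : ℝ, 1 ≤ A ∧
      ∀ U : Set (En n), U ≠ Set.univ → (frontier U).Nonempty →
        ¬ Bornology.IsBounded U → IsUniformDomain cu Cu U →
        ∀ h : En n → ℝ, ContinuousOn h (closure U) → (∀ z ∈ U, 0 < h z) →
          IsHarmonicOn h U → (∀ z ∈ frontier U, h z = 0) →
          ∀ x ∈ U, ∀ r : ℝ, 0 < r →
            ∀ xr ∈ U, innerDist U x xr ≤ ENNReal.ofReal (r / 4) →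
              cu * r / 8 ≤ Metric.infDist xr (frontier U) →
              A⁻¹ * (h xr)^2 * r^n ≤
                  (∫ y in {y | y ∈ U ∧ innerDist U x y < ENNReal.ofReal r}, (h y)^2) ∧
              (∫ y in {y | y ∈ U ∧ innerDist U x y < ENNReal.ofReal r}, (h y)^2) ≤
                  A * (h xr)^2 * r^n := by
  obtain ⟨K, hK⟩ := exists_carleson_const n hcu.1 hcu.2.le (zero_le_one.trans hCu.le)
  let ω := (volume : Measure (En n)).real (closedBall 0 1)
  let a := ω / (3 * 2 ^ n) ^ 2 * (cu / 64) ^ n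
  have ha : 0 < a := mul_pos (div_pos (volume_real_closedBall_pos n) (by positivity))
    (pow_pos (div_pos hcu.1 (by norm_num)) n)
  refine ⟨max 1 (max (ω * K ^ 2) a⁻¹), le_max_left _ _,
    fun U _ _ hbdd hU h hcont hpos hharm hzero x _ r hr xr hxr hxxr hdxr => ?_⟩
  have hg := isHarmonicProfile_indicator hU.1 hcont hpos hharm hzero
  have hint : ∫ y in innerBall U x (ENNReal.ofReal r), h y ^ 2 =
      ∫ y in innerBall U x (ENNReal.ofReal r), U.indicator h y ^ 2 :=
    setIntegral_congr_fun (isOpen_innerBall hU.1 x _).measurableSet fun y hy => by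
      simp only [indicator_of_mem hy.1]
  have hlower := hg.le_setIntegral_innerBall hU.1 hcu.1 hcu.2.le hr hxr hxxr hdxr
  have hupper := hg.setIntegral_innerBall_le (fun y => hK U _ hU hbdd hg y xr hxr r hr hdxr)
    hr.le hxxr
  rw [← hint, indicator_of_mem hxr] at hlower hupper
  constructor
  · refine le_trans ?_ hlower
    gcongr
    exact inv_le_of_inv_le₀ ha ((le_max_right _ _).trans (le_max_right _ _))
  · refine hupper.trans ?_
    gcongr
    exact (le_max_left _ _).trans (le_max_right _ _)
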